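/- Darboux intertwining, first identity (equation (Id1)). For every 0 ≤ i ≤ m and every φ at which W(φ) ≠ 0 and W̃(φ) ≠ 0, one has −Ψ̃_{m+1}(φ) · (d/dφ)(Ψ̃_i/Ψ̃_{m+1})(φ) = −Ψ_i(φ); that is, the operator A_m^* := −Ψ̃_{m+1} ∘ (d/dφ) ∘ Ψ̃_{m+1}^{−1} sends Ψ̃_i to −Ψ_i. -/

import Mathlib

/-- The Wronskian of a family of `n` real functions: the determinant of the
`n × n` matrix whose `(i, j)`-entry is the `j`-th derivative of the `i`-th function. -/
noncomputable def wronsk {n : ℕ} (f : Fin n → ℝ → ℝ) (t : ℝ) : ℝ :=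
  (Matrix.of fun i j : Fin n => iteratedDeriv (j : ℕ) (f i) t).det

/-- The functions `χ_i(φ) = cos(k_i φ + θ_i)`, `0 ≤ i ≤ m+1`. -/
noncomputable def chiF (m : ℕ) (k : Fin (m + 2) → ℤ) (θ : Fin (m + 2) → ℝ)
    (i : Fin (m + 2)) : ℝ → ℝ :=
  fun φ => Real.cos ((k i : ℝ) * φ + θ i)

/-- `W(φ) = Wr[χ_0, …, χ_m](φ)` (the first `m+1` functions). -/
noncomputable def Wfn (m : ℕ) (k : Fin (m + 2) → ℤ) (θ : Fin (m + 2) → ℝ) : ℝ → ℝ :=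
  wronsk fun j : Fin (m + 1) => chiF m k θ j.castSucc

/-- `W̃(φ) = Wr[χ_0, …, χ_{m+1}](φ)` (all `m+2` functions). -/
noncomputable def Wtfn (m : ℕ) (k : Fin (m + 2) → ℤ) (θ : Fin (m + 2) → ℝ) : ℝ → ℝ :=
  wronsk (chiF m k θ)

/-- `Ψ_i(φ) = Wr[χ_0, …, χ_{i−1}, χ_{i+1}, …, χ_m](φ)/W(φ)` for `0 ≤ i ≤ m`. -/
noncomputable def PsiF (m : ℕ) (k : Fin (m + 2) → ℤ) (θ : Fin (m + 2) → ℝ)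
    (i : Fin (m + 1)) : ℝ → ℝ :=
  fun φ => wronsk (fun j : Fin m => chiF m k θ (i.succAbove j).castSucc) φ / Wfn m k θ φ

/-- `Ψ̃_i(φ) = Wr[χ_0, …, χ_{i−1}, χ_{i+1}, …, χ_{m+1}](φ)/W̃(φ)` for `0 ≤ i ≤ m+1`. -/
noncomputable def PsitF (m : ℕ) (k : Fin (m + 2) → ℤ) (θ : Fin (m + 2) → ℝ)
    (i : Fin (m + 2)) : ℝ → ℝ :=
  fun φ => wronsk (fun j : Fin (m + 1) => chiF m k θ (i.succAbove j)) φ / Wtfn m k θ φ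

/-!
Replacing two columns `p`, `q` of `A` by `u`, `v` gives a matrix `A[u, v]`. Substituting
`det A • u = A * cramer A u` and expanding in the column `p`, all but two terms have a repeated
column, so `det A * det A[u, v] = cramer A u p * cramer A v q - cramer A u q * cramer A v p`. For
basis vectors `u`, `v` this is the Desnanot–Jacobi identity for minors of `A`. A Wronskian is
differentiated by differentiating its last column only, so when `A` is the Wronskian matrix of
`χ_0, …, χ_{m+1}` and its last two columns are used, the identity evaluates the numerator of
`(Ψ̃_i / Ψ̃_{m+1})' = (Wr[…, χ_{i-1}, χ_{i+1}, …, χ_{m+1}] / W)'` as `W̃` times the numerator of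
`Ψ_i`.
-/

section Minors

open Matrix

variable {R : Type*} [CommRing R]

lemma cramer_updateCol_col {ι : Type*} [Fintype ι] [DecidableEq ι] (A : Matrix ι ι R)
    {p q : ι} (hpq : p ≠ q) (v : ι → R) :
    (A.updateCol q v).cramer (A.col q) p = -A.cramer v p := by
  have hswap : (A.updateCol q v).updateCol p (A.col q)
      = (A.updateCol p v).submatrix id (Equiv.swap p q) := by
    ext i j
    rcases eq_or_ne j p with rfl | hjp
    · simp [hpq.symm]
    rcases eq_or_ne j q with rfl | hjq
    · simp [hjp]
    · simp [hjp, hjq, Equiv.swap_apply_of_ne_of_ne]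
  rw [cramer_apply, cramer_apply, hswap, det_permute', Equiv.Perm.sign_swap hpq]
  simp

theorem det_mul_det_updateCol_updateCol {ι : Type*} [Fintype ι] [DecidableEq ι]
    (A : Matrix ι ι R) {p q : ι} (hpq : p ≠ q) (u v : ι → R) :
    A.det * ((A.updateCol p u).updateCol q v).det
      = A.cramer u p * A.cramer v q - A.cramer u q * A.cramer v p := by
  set B := A.updateCol q v with hB
  have hself : B.cramer (A.col p) p = A.cramer v q := by
    have hcol : A.col p = B.col p := by
      ext i
      simp [hB, hpq]
    rw [cramer_apply, hcol, cramer_apply]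
    exact congrArg det (B.updateCol_eq_self p)
  have hother (j : ι) (hj : j ≠ p ∧ j ≠ q) : B.cramer (A.col j) p = 0 := by
    rw [cramer_row_self B _ j fun i => by simp [hB, hj.2], Pi.single_eq_of_ne hj.1.symm]
  calc A.det * ((A.updateCol p u).updateCol q v).det
      = B.cramer (A.det • u) p := by
        rw [updateCol_comm _ hpq, ← cramer_apply, map_smul, Pi.smul_apply, smul_eq_mul]
    _ = ∑ j, A.cramer u j * B.cramer (A.col j) p := by
        rw [← mulVec_cramer, mulVec_eq_sum, map_sum, Finset.sum_apply]
        simp [col_def]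
    _ = A.cramer u p * B.cramer (A.col p) p + A.cramer u q * B.cramer (A.col q) p :=
        Fintype.sum_eq_add p q hpq fun j hj => by rw [hother j hj, mul_zero]
    _ = A.cramer u p * A.cramer v q - A.cramer u q * A.cramer v p := by
        rw [hself, cramer_updateCol_col A hpq]
        ring

lemma cramer_single_one {n : ℕ} (A : Matrix (Fin (n + 1)) (Fin (n + 1)) R) (i j : Fin (n + 1)) :
    A.cramer (Pi.single i 1) j
      = (-1) ^ (i + j : ℕ) * (A.submatrix i.succAbove j.succAbove).det := by
  rw [cramer_eq_adjugate_mulVec, mulVec_single_one, col_apply, adjugate_fin_succ_eq_det_submatrix]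

lemma cramer_single_last_last {n : ℕ} (A : Matrix (Fin (n + 1)) (Fin (n + 1)) R) :
    A.cramer (Pi.single (Fin.last n) 1) (Fin.last n)
      = (A.submatrix Fin.castSucc Fin.castSucc).det := by
  rw [cramer_single_one, (Even.add_self _).neg_one_pow, one_mul, Fin.succAbove_last]

lemma det_updateCol_single_updateCol_last {n : ℕ} (A : Matrix (Fin (n + 2)) (Fin (n + 2)) R)
    (i k : Fin (n + 1)) :
    ((A.updateCol k.castSucc (Pi.single i.castSucc 1)).updateCol (Fin.last (n + 1))
        (Pi.single (Fin.last (n + 1)) 1)).det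
      = (-1) ^ (i + k : ℕ) *
        (A.submatrix (Fin.castSucc ∘ i.succAbove) (Fin.castSucc ∘ k.succAbove)).det := by
  have hminor :
      (A.updateCol k.castSucc (Pi.single i.castSucc 1)).submatrix Fin.castSucc Fin.castSucc
        = (A.submatrix Fin.castSucc Fin.castSucc).updateCol k (Pi.single i 1) := by
    ext r c
    simp [updateCol_apply, Pi.single_apply]
  rw [← cramer_apply, cramer_single_last_last, hminor, ← cramer_apply, cramer_single_one,
    submatrix_submatrix]

theorem desnanot_jacobi {n : ℕ} (A : Matrix (Fin (n + 2)) (Fin (n + 2)) R) (i k : Fin (n + 1)) :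
    A.det * (A.submatrix (Fin.castSucc ∘ i.succAbove) (Fin.castSucc ∘ k.succAbove)).det
      = (A.submatrix i.castSucc.succAbove k.castSucc.succAbove).det *
          (A.submatrix Fin.castSucc Fin.castSucc).det
        - (A.submatrix i.castSucc.succAbove Fin.castSucc).det *
          (A.submatrix Fin.castSucc k.castSucc.succAbove).det := by
  have h := det_mul_det_updateCol_updateCol A k.castSucc_lt_last.ne
    (Pi.single i.castSucc 1) (Pi.single (Fin.last (n + 1)) 1)
  rw [det_updateCol_single_updateCol_last, cramer_single_last_last] at h
  simp only [cramer_single_one, Fin.succAbove_last, Fin.val_castSucc, Fin.val_last] at h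
  have hsign : ((-1 : R) ^ (n + 1)) * (-1) ^ (n + 1) = 1 := by
    rw [← pow_add, (Even.add_self _).neg_one_pow]
  apply ((isUnit_one.neg : IsUnit (-1 : R)).pow (i + k : ℕ)).mul_left_cancel
  simp only [pow_add _ (i : ℕ), pow_add _ (n + 1)] at h ⊢
  linear_combination h - (-1) ^ (i : ℕ) * (-1) ^ (k : ℕ) *
    ((A.submatrix i.castSucc.succAbove Fin.castSucc).det *
      (A.submatrix Fin.castSucc k.castSucc.succAbove).det) * hsign

end Minors

theorem hasDerivAt_det {𝕜 ι : Type*} [NontriviallyNormedField 𝕜] [Fintype ι] [DecidableEq ι]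
    {A : 𝕜 → Matrix ι ι 𝕜} {A' : Matrix ι ι 𝕜} {t : 𝕜}
    (hA : ∀ i j, HasDerivAt (fun s => A s i j) (A' i j) t) :
    HasDerivAt (fun s => (A s).det) (∑ j, ((A t).updateCol j (A'.col j)).det) t := by
  let D : ContinuousMultilinearMap 𝕜 (fun _ : ι => ι → 𝕜) 𝕜 :=
    ⟨Matrix.detRowAlternating.toMultilinearMap, continuous_id.matrix_det⟩
  have hAT : HasDerivAt (fun s j i => A s i j) (fun j i => A' i j) t :=
    hasDerivAt_pi.2 fun j => hasDerivAt_pi.2 fun i => hA i j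
  have hD := (D.hasFDerivAt fun j i => A t i j).comp_hasDerivAt t hAT
  have hdet : (fun s => (A s).det) = D ∘ fun s j i => A s i j :=
    funext fun s => (Matrix.det_transpose (A s)).symm
  rw [hdet]
  refine hD.congr_deriv ?_
  rw [D.linearDeriv_apply]
  refine Finset.sum_congr rfl fun j _ => ?_
  rw [← Matrix.det_transpose, ← Matrix.updateRow_transpose]
  rfl

section IteratedDeriv

variable {𝕜 F : Type*} [NontriviallyNormedField 𝕜] [NormedAddCommGroup F] [NormedSpace 𝕜 F]

lemma continuousAt_iteratedDeriv {f : 𝕜 → F} {n : WithTop ℕ∞} {j : ℕ} {t : 𝕜}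
    (hf : ContDiffAt 𝕜 n f t) (hj : j ≤ n) : ContinuousAt (iteratedDeriv j f) t := by
  have hcont : ContinuousAt (iteratedFDeriv 𝕜 j f) t :=
    (hf.iteratedFDeriv_right (m := 0) (by simpa using hj)).continuousAt
  rw [iteratedDeriv_eq_equiv_comp]
  exact (LinearIsometryEquiv.continuous _).continuousAt.comp hcont

lemma hasDerivAt_iteratedDeriv {f : 𝕜 → F} {n : WithTop ℕ∞} {j : ℕ} {t : 𝕜}
    (hf : ContDiffAt 𝕜 n f t) (hj : j < n) :
    HasDerivAt (iteratedDeriv j f) (iteratedDeriv (j + 1) f t) t := by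
  have hdiff := hf.contDiffWithinAt.differentiableWithinAt_iteratedDerivWithin (m := j)
    (s := Set.univ) hj (by simp)
  rw [iteratedDerivWithin_univ, differentiableWithinAt_univ] at hdiff
  rw [iteratedDeriv_succ]
  exact hdiff.hasDerivAt

end IteratedDeriv

section Wronskian

/-- The truncated jets at `t` of a family of functions: the `j`-th column holds the `j`-th
derivatives, `j < N`. Wronskians of subfamilies, and their derivatives, are minors of it. -/
noncomputable def jetMatrix {ι : Type*} (f : ι → ℝ → ℝ) (N : ℕ) (t : ℝ) : Matrix ι (Fin N) ℝ :=
  Matrix.of fun i j => iteratedDeriv j (f i) t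

lemma continuousAt_wronsk {n : ℕ} {f : Fin (n + 1) → ℝ → ℝ} {t : ℝ}
    (hf : ∀ i, ContDiffAt ℝ n (f i) t) : ContinuousAt (wronsk f) t := by
  have hjet : ContinuousAt (jetMatrix f (n + 1)) t :=
    continuousAt_pi.2 fun i => continuousAt_pi.2 fun j =>
      continuousAt_iteratedDeriv (hf i) (by exact_mod_cast Nat.le_of_lt_succ j.isLt)
  exact continuous_id.matrix_det.continuousAt.comp hjet

theorem hasDerivAt_wronsk {n : ℕ} {f : Fin (n + 1) → ℝ → ℝ} {t : ℝ}
    (hf : ∀ i, ContDiffAt ℝ (n + 1) (f i) t) :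
    HasDerivAt (wronsk f)
      ((jetMatrix f (n + 2) t).submatrix id (Fin.last n).castSucc.succAbove).det t := by
  let J' : Matrix (Fin (n + 1)) (Fin (n + 1)) ℝ := (jetMatrix f (n + 2) t).submatrix id Fin.succ
  have hcols : HasDerivAt (wronsk f)
      (∑ j, ((jetMatrix f (n + 1) t).updateCol j (J'.col j)).det) t :=
    hasDerivAt_det fun i j => hasDerivAt_iteratedDeriv (hf i) (by exact_mod_cast j.isLt)
  -- Differentiating a column other than the last one makes it equal to the next column.
  have hzero (j : Fin (n + 1)) (hj : j ≠ Fin.last n) :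
      ((jetMatrix f (n + 1) t).updateCol j (J'.col j)).det = 0 := by
    obtain ⟨j, rfl⟩ := Fin.exists_castSucc_eq.2 hj
    refine Matrix.det_zero_of_column_eq (i := j.castSucc) (j := j.succ)
      Fin.castSucc_lt_succ.ne fun i => ?_
    rw [Matrix.updateCol_self, Matrix.updateCol_ne Fin.castSucc_lt_succ.ne']
    simp [J', jetMatrix]
  have hlast : (jetMatrix f (n + 1) t).updateCol (Fin.last n) (J'.col (Fin.last n))
      = (jetMatrix f (n + 2) t).submatrix id (Fin.last n).castSucc.succAbove := by
    ext i j
    cases j using Fin.lastCases with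
    | last => simp [J', jetMatrix]
    | cast j =>
      have hj : (Fin.last n).castSucc.succAbove j.castSucc = j.castSucc.castSucc :=
        Fin.succAbove_of_castSucc_lt _ _ (by simp [Fin.lt_def])
      simp [jetMatrix, hj]
  rwa [Fintype.sum_eq_single _ hzero, hlast] at hcols

theorem hasDerivAt_wronsk_div_wronsk {m : ℕ} {f : Fin (m + 2) → ℝ → ℝ} {t : ℝ}
    (hf : ∀ i, ContDiffAt ℝ (m + 1) (f i) t) (i : Fin (m + 1))
    (hW : wronsk (f ∘ Fin.castSucc) t ≠ 0) :
    HasDerivAt (fun s => wronsk (f ∘ i.castSucc.succAbove) s / wronsk (f ∘ Fin.castSucc) s)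
      (wronsk f t * wronsk (f ∘ Fin.castSucc ∘ i.succAbove) t /
        wronsk (f ∘ Fin.castSucc) t ^ 2) t := by
  have hU := hasDerivAt_wronsk (f := f ∘ i.castSucc.succAbove) fun _ => hf _
  have hV := hasDerivAt_wronsk (f := f ∘ Fin.castSucc) fun _ => hf _
  have hjacobi := desnanot_jacobi (jetMatrix f (m + 2) t) i (Fin.last m)
  rw [Fin.succAbove_last] at hjacobi
  refine (hU.fun_div hV hW).congr_deriv ?_
  congr 1
  exact hjacobi.symm

/-- The quotients `Ψ_i` for an arbitrary family: the Wronskian of the family without its `i`-th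
member, divided by the Wronskian of the whole family. -/
noncomputable def wronskRatio {n : ℕ} (f : Fin (n + 1) → ℝ → ℝ) (i : Fin (n + 1)) (t : ℝ) : ℝ :=
  wronsk (f ∘ i.succAbove) t / wronsk f t

theorem wronskRatio_div_wronskRatio {n : ℕ} {f : Fin (n + 1) → ℝ → ℝ} {t : ℝ}
    (hW : wronsk f t ≠ 0) (i j : Fin (n + 1)) :
    wronskRatio f i t / wronskRatio f j t
      = wronsk (f ∘ i.succAbove) t / wronsk (f ∘ j.succAbove) t :=
  div_div_div_cancel_right₀ hW _ _

theorem hasDerivAt_wronskRatio_div_wronskRatio_last {m : ℕ} {f : Fin (m + 2) → ℝ → ℝ} {t : ℝ}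
    (hf : ∀ i, ContDiffAt ℝ (m + 1) (f i) t) (i : Fin (m + 1))
    (hW : wronsk (f ∘ Fin.castSucc) t ≠ 0) (hWt : wronsk f t ≠ 0) :
    HasDerivAt (fun s => wronskRatio f i.castSucc s / wronskRatio f (Fin.last (m + 1)) s)
      (wronskRatio (f ∘ Fin.castSucc) i t / wronskRatio f (Fin.last (m + 1)) t) t := by
  have hratio : (fun s => wronskRatio f i.castSucc s / wronskRatio f (Fin.last (m + 1)) s)
      =ᶠ[nhds t] fun s => wronsk (f ∘ i.castSucc.succAbove) s / wronsk (f ∘ Fin.castSucc) s := by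
    filter_upwards [(continuousAt_wronsk (by exact_mod_cast hf)).eventually_ne hWt] with s hs
    rw [wronskRatio_div_wronskRatio hs, Fin.succAbove_last]
  refine ((hasDerivAt_wronsk_div_wronsk hf i hW).congr_of_eventuallyEq hratio).congr_deriv ?_
  simp only [wronskRatio, Fin.succAbove_last, Function.comp_assoc]
  field_simp

theorem darboux_intertwining_first_general {m : ℕ} {f : Fin (m + 2) → ℝ → ℝ} {t : ℝ}
    (hf : ∀ i, ContDiffAt ℝ (m + 1) (f i) t) (i : Fin (m + 1))
    (hW : wronsk (f ∘ Fin.castSucc) t ≠ 0) (hWt : wronsk f t ≠ 0) :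
    -wronskRatio f (Fin.last (m + 1)) t *
        deriv (fun s => wronskRatio f i.castSucc s / wronskRatio f (Fin.last (m + 1)) s) t
      = -wronskRatio (f ∘ Fin.castSucc) i t := by
  have hlast : wronskRatio f (Fin.last (m + 1)) t ≠ 0 := by
    rw [wronskRatio, Fin.succAbove_last]
    exact div_ne_zero hW hWt
  rw [(hasDerivAt_wronskRatio_div_wronskRatio_last hf i hW hWt).deriv, neg_mul,
    mul_div_cancel₀ _ hlast]

end Wronskian

lemma contDiff_chiF (m : ℕ) (k : Fin (m + 2) → ℤ) (θ : Fin (m + 2) → ℝ) (i : Fin (m + 2))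
    {n : WithTop ℕ∞} : ContDiff ℝ n (chiF m k θ i) := by
  unfold chiF
  fun_prop

/-- **Equation (Id1): Darboux intertwining, first identity.** The operator
`A_m^* = −Ψ̃_{m+1} ∘ (d/dφ) ∘ Ψ̃_{m+1}^{−1}` sends `Ψ̃_i` to `−Ψ_i` for `0 ≤ i ≤ m`. -/
theorem darboux_intertwining_first (m : ℕ) (hm : 1 ≤ m)
    (k : Fin (m + 2) → ℤ) (hk0 : k 0 = 0) (hk : StrictMono k)
    (θ : Fin (m + 2) → ℝ) (hθ0 : θ 0 = 0)
    (i : Fin (m + 1)) (φ : ℝ)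
    (hW : Wfn m k θ φ ≠ 0) (hWt : Wtfn m k θ φ ≠ 0) :
    -PsitF m k θ (Fin.last (m + 1)) φ *
        deriv (fun t => PsitF m k θ i.castSucc t / PsitF m k θ (Fin.last (m + 1)) t) φ
      = -PsiF m k θ i φ :=
  darboux_intertwining_first_general (fun i => (contDiff_chiF m k θ i).contDiffAt) i hW hWt
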